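/- arXiv:1801.04409 — 6 statements merged into one kernel-verified Lean document; each statement's English description precedes it below -/
import Mathlib

section
/- Let k be an algebraically closed field, A a k-algebra, and let V and W be indecomposable A-modules that are finite-dimensional as k-vector spaces. Let f : V → W be an A-module homomorphism. Then the following are equivalent: (a) for every A-module homomorphism g : W → V the k-linear trace of f ∘ g (an endomorphism of W) is zero; (b) either f is not bijective, or the image of the k-dimension of V in k is zero (i.e., (finrank_k V : k) = 0). -/
/-- An `A`-module `V` is indecomposable if it is nonzero and its only idempotent
`A`-module endomorphisms are `0` and the identity. -/
def Module.Indecomposable (A V : Type*) [Ring A] [AddCommGroup V] [Module A V] : Prop :=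
  Nontrivial V ∧ ∀ e : V →ₗ[A] V, e ∘ₗ e = e → e = 0 ∨ e = LinearMap.id

lemma Module.Indecomposable.fitting {k A W : Type*} [Field k] [Ring A] [Algebra k A]
    [AddCommGroup W] [Module k W] [Module A W] [IsScalarTower k A W] [FiniteDimensional k W]
    (hW : Module.Indecomposable A W) (h : Module.End A W) :
    IsNilpotent h ∨ Function.Bijective h := by
  have : IsNoetherian A W := isNoetherian_of_tower k inferInstance
  have : IsArtinian A W := isArtinian_of_tower k inferInstance
  obtain ⟨n, hn⟩ := Filter.eventually_atTop.mp h.eventually_isCompl_ker_pow_range_pow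
  have hc := hn (n + 1) (by omega)
  have hid : Submodule.projection _ _ hc ∘ₗ Submodule.projection _ _ hc = Submodule.projection _ _ hc :=
    Submodule.isIdempotentElem_projection hc
  rcases hW.2 _ hid with h0 | h1
  · right
    have hk : LinearMap.ker (h ^ (n + 1)) = ⊥ := by
      rw [← Submodule.range_projection hc, h0, LinearMap.range_zero]
    have hr : LinearMap.range (h ^ (n + 1)) = ⊤ := by
      rw [← Submodule.ker_projection hc, h0, LinearMap.ker_zero]
    constructor
    · have := LinearMap.ker_eq_bot.mp hk
      rw [pow_succ] at this
      exact Function.Injective.of_comp (f := ⇑(h ^ n)) this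
    · have := LinearMap.range_eq_top.mp hr
      rw [pow_succ'] at this
      exact Function.Surjective.of_comp (g := ⇑(h ^ n)) this
  · left
    refine ⟨n + 1, LinearMap.ker_eq_top.mp ?_⟩
    rw [← Submodule.range_projection hc, h1, LinearMap.range_id]

lemma trace_zero_of_nilp {k A W : Type*} [Field k] [Ring A] [Algebra k A]
    [AddCommGroup W] [Module k W] [Module A W] [IsScalarTower k A W] [FiniteDimensional k W]
    (h : Module.End A W) (hh : IsNilpotent h) :
    LinearMap.trace k W (LinearMap.restrictScalars k h) = 0 := by
  have : IsNilpotent (LinearMap.restrictScalars k h : Module.End k W) := by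
    obtain ⟨n, hn⟩ := hh
    refine ⟨n, ?_⟩
    ext x
    have := LinearMap.congr_fun hn x
    rw [Module.End.pow_apply] at this ⊢
    exact this
  exact (LinearMap.isNilpotent_trace_of_isNilpotent this).eq_zero

/-- Characterization of negligible morphisms between indecomposable modules:
`f : V → W` satisfies `Tr(f ∘ g) = 0` for all `g : W → V` iff `f` is not an
isomorphism or `dim V = 0` in `k`. -/
theorem negligible_iff_not_bijective_or_finrank_eq_zero
    {k A V W : Type*} [Field k] [IsAlgClosed k] [Ring A] [Algebra k A]
    [AddCommGroup V] [AddCommGroup W] [Module k V] [Module k W]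
    [Module A V] [Module A W] [IsScalarTower k A V] [IsScalarTower k A W]
    [FiniteDimensional k V] [FiniteDimensional k W]
    (hV : Module.Indecomposable A V) (hW : Module.Indecomposable A W)
    (f : V →ₗ[A] W) :
    (∀ g : W →ₗ[A] V, LinearMap.trace k W (LinearMap.restrictScalars k (f ∘ₗ g)) = 0) ↔
      (¬ Function.Bijective f ∨ (Module.finrank k V : k) = 0) := by
  have := hW.1
  have hdim : Function.Bijective f → Module.finrank k V = Module.finrank k W := fun hf =>
    ((LinearEquiv.ofBijective f hf).restrictScalars k).finrank_eq
  constructor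
  · intro H
    by_cases hf : Function.Bijective f
    · right
      have h1 := H (LinearEquiv.ofBijective f hf).symm
      have h2 : LinearMap.restrictScalars k
          (f ∘ₗ ((LinearEquiv.ofBijective f hf).symm : W →ₗ[A] V)) = LinearMap.id := by
        ext x
        exact (LinearEquiv.ofBijective f hf).apply_symm_apply x
      rw [h2, LinearMap.trace_id] at h1
      rw [hdim hf, h1]
    · exact Or.inl hf
  · intro H g
    by_cases hf : Function.Bijective f
    · have hd := H.resolve_left (not_not.mpr hf)
      rw [hdim hf] at hd
      have : SMulCommClass A k W := IsScalarTower.to_smulCommClass'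
      obtain ⟨c, hc⟩ := Module.End.exists_eigenvalue
        (LinearMap.restrictScalars k (f ∘ₗ g) : Module.End k W)
      obtain ⟨v, hv⟩ := hc.exists_hasEigenvector
      have hn : IsNilpotent (f ∘ₗ g - c • LinearMap.id : Module.End A W) := by
        refine (hW.fitting (k := k) _).resolve_right fun hb => hv.2 (hb.1 ?_)
        have := hv.apply_eq_smul
        simp only [LinearMap.restrictScalars_apply] at this
        rw [map_zero, LinearMap.sub_apply, this]
        simp
      have ht := trace_zero_of_nilp (k := k) _ hn
      have he : LinearMap.restrictScalars k (f ∘ₗ g - c • LinearMap.id : Module.End A W)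
          = LinearMap.restrictScalars k (f ∘ₗ g) - c • LinearMap.id := rfl
      rw [he, map_sub, map_smul, LinearMap.trace_id, hd, smul_zero, sub_zero] at ht
      exact ht
    · refine trace_zero_of_nilp (k := k) (f ∘ₗ g)
        ((hW.fitting (k := k) (f ∘ₗ g)).resolve_right fun hb => hf ?_)
      let φ := LinearEquiv.ofBijective (f ∘ₗ g) hb
      have h1 : ∀ x, f (g (φ.symm x)) = x := fun x => φ.apply_symm_apply x
      have hs : Function.Surjective f := fun x => ⟨_, h1 x⟩
      have hee : (g ∘ₗ (φ.symm : W →ₗ[A] W) ∘ₗ f) ∘ₗ (g ∘ₗ (φ.symm : W →ₗ[A] W) ∘ₗ f)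
          = g ∘ₗ (φ.symm : W →ₗ[A] W) ∘ₗ f := by
        ext x
        simp [h1]
      refine ⟨?_, hs⟩
      rcases hV.2 _ hee with h0 | h0
      · exfalso
        obtain ⟨w, hw⟩ := exists_ne (0 : W)
        obtain ⟨v, rfl⟩ := hs w
        have := LinearMap.congr_fun h0 v
        apply hw
        rw [← h1 (f v)]
        have h2 : g (φ.symm (f v)) = 0 := this
        rw [h2, map_zero]
      · intro x y hxy
        have hx : g (φ.symm (f x)) = x := LinearMap.congr_fun h0 x
        have hy : g (φ.symm (f y)) = y := LinearMap.congr_fun h0 y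
        rw [← hx, ← hy, hxy]
end

section
/- Let k be a field, G a finite group, and H a subgroup of G such that the index [G : H] is nonzero in k (i.e., the image of the natural number [G : H] in k is a unit). Let V and W be finite-dimensional k-linear representations of G, and let f : V → W be a G-equivariant linear map such that for every G-equivariant linear map g : W → V one has trace(f ∘ g) = 0. Then for every H-equivariant linear map g : W → V one also has trace(f ∘ g) = 0. -/
/-- If `f` is a negligible morphism of `G`-representations and `H ≤ G` has index
invertible in `k`, then `f` is negligible as a morphism of `H`-representations. -/
theorem negligible_restrict_of_index_isUnit
    {k G V W : Type*} [Field k] [Group G] [Finite G]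
    [AddCommGroup V] [Module k V] [AddCommGroup W] [Module k W]
    [FiniteDimensional k V] [FiniteDimensional k W]
    (H : Subgroup G) (hH : IsUnit (H.index : k))
    (ρV : Representation k G V) (ρW : Representation k G W)
    (f : V →ₗ[k] W) (hf : ∀ s : G, f ∘ₗ ρV s = ρW s ∘ₗ f)
    (hneg : ∀ g : W →ₗ[k] V, (∀ s : G, g ∘ₗ ρW s = ρV s ∘ₗ g) →
      LinearMap.trace k W (f ∘ₗ g) = 0) :
    ∀ g : W →ₗ[k] V, (∀ s : G, s ∈ H → g ∘ₗ ρW s = ρV s ∘ₗ g) →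
      LinearMap.trace k W (f ∘ₗ g) = 0 := by
  intro g hg
  classical
  have : Fintype (G ⧸ H) := Fintype.ofFinite _
  -- the conjugation action on `Hom(W, V)`
  let L := Representation.linHom ρW ρV
  have hL : ∀ (s : G) (φ : W →ₗ[k] V), L s φ = ρV s ∘ₗ φ ∘ₗ ρW s⁻¹ := fun s φ => rfl
  have hVinv : ∀ (s : G) (x : V), ρV s (ρV s⁻¹ x) = x := fun s x => by
    rw [← Module.End.mul_apply, ← map_mul]; simp
  have hWinv : ∀ (s : G) (x : W), ρW s (ρW s⁻¹ x) = x := fun s x => by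
    rw [← Module.End.mul_apply, ← map_mul]; simp
  have hWinv2 : ∀ (s : G) (x : W), ρW s⁻¹ (ρW s x) = x := fun s x => by
    rw [← Module.End.mul_apply, ← map_mul]; simp
  have hfix : ∀ s ∈ H, L s g = g := by
    intro s hs
    ext x
    have h1 := LinearMap.congr_fun (hg s hs) (ρW s⁻¹ x)
    simp only [LinearMap.comp_apply, hWinv] at h1
    simp only [hL, LinearMap.comp_apply, ← h1]
  have hc : ∀ s t : G, (s : G ⧸ H) = (t : G ⧸ H) → L s g = L t g := by
    intro s t hst
    have hm := QuotientGroup.eq.1 hst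
    have h2 : t = s * (s⁻¹ * t) := by group
    rw [h2, map_mul, Module.End.mul_apply, hfix _ hm]
  let T : W →ₗ[k] V := ∑ q : G ⧸ H, L q.out g
  have hT : ∀ s : G, L s T = T := by
    intro s
    simp only [T, map_sum]
    refine Fintype.sum_equiv (MulAction.toPerm s) _ _ (fun q => ?_)
    rw [← Module.End.mul_apply, ← map_mul]
    apply hc
    rw [MulAction.toPerm_apply, QuotientGroup.out_eq']
    conv_rhs => rw [← QuotientGroup.out_eq' q]
    rfl
  have hTeq : ∀ s : G, T ∘ₗ ρW s = ρV s ∘ₗ T := by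
    intro s
    ext x
    have h1 := LinearMap.congr_fun (hT s) (ρW s x)
    simp only [hL, LinearMap.comp_apply, hWinv2] at h1
    simp only [LinearMap.comp_apply, h1]
  have htr : ∀ s : G, LinearMap.trace k W (f ∘ₗ L s g) = LinearMap.trace k W (f ∘ₗ g) := by
    intro s
    have h1 : f ∘ₗ L s g = ρW s * ((f ∘ₗ g) * ρW s⁻¹) := by
      rw [hL, ← LinearMap.comp_assoc, hf]
      rfl
    have h2 : ((f ∘ₗ g) * ρW s⁻¹) * ρW s = f ∘ₗ g := by
      rw [mul_assoc, ← map_mul]; simp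
    rw [h1, LinearMap.trace_mul_comm, h2]
  have h0 := hneg T hTeq
  have hsum : f ∘ₗ T = ∑ q : G ⧸ H, f ∘ₗ L q.out g := by
    ext x
    simp [T, LinearMap.sum_apply]
  rw [hsum, map_sum, Finset.sum_congr rfl (fun q _ => htr q.out), Finset.sum_const,
    nsmul_eq_mul, Finset.card_univ, ← Nat.card_eq_fintype_card] at h0
  exact (mul_eq_zero.1 h0).resolve_left hH.ne_zero
end

section
/- Let k be a field, G a group, and let V, W, Z, T be finite-dimensional k-linear representations of G. Let f : V → W be a G-equivariant linear map such that for every G-equivariant linear map g : W → V one has trace(f ∘ g) = 0, and let a : Z → T be any G-equivariant linear map. Then for every G-equivariant linear map h : T ⊗ W → Z ⊗ V (with respect to the tensor product representations) one has trace((a ⊗ f) ∘ h) = 0, where a ⊗ f : Z ⊗ V → T ⊗ W is the tensor product of the linear maps a and f. -/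
open TensorProduct

/-- Negligible morphisms form a tensor ideal: if `f : V → W` is negligible and
`a : Z → T` is any morphism of representations, then `a ⊗ f` is negligible. -/
theorem negligible_tensor
    {k G V W Z T : Type*} [Field k] [Group G]
    [AddCommGroup V] [Module k V] [AddCommGroup W] [Module k W]
    [AddCommGroup Z] [Module k Z] [AddCommGroup T] [Module k T]
    [FiniteDimensional k V] [FiniteDimensional k W]
    [FiniteDimensional k Z] [FiniteDimensional k T]
    (ρV : Representation k G V) (ρW : Representation k G W)
    (ρZ : Representation k G Z) (ρT : Representation k G T)
    (f : V →ₗ[k] W) (hf : ∀ s : G, f ∘ₗ ρV s = ρW s ∘ₗ f)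
    (hneg : ∀ g : W →ₗ[k] V, (∀ s : G, g ∘ₗ ρW s = ρV s ∘ₗ g) →
      LinearMap.trace k W (f ∘ₗ g) = 0)
    (a : Z →ₗ[k] T) (ha : ∀ s : G, a ∘ₗ ρZ s = ρT s ∘ₗ a) :
    ∀ h : (T ⊗[k] W) →ₗ[k] (Z ⊗[k] V),
      (∀ s : G, h ∘ₗ (ρT.tprod ρW) s = (ρZ.tprod ρV) s ∘ₗ h) →
      LinearMap.trace k (T ⊗[k] W) ((TensorProduct.map a f) ∘ₗ h) = 0 := by
  intro h hh
  obtain ⟨x, rfl⟩ := (homTensorHomEquiv k T W Z V).surjective h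
  -- the partial trace (twisted by `a`) over the first factor
  let L : (T →ₗ[k] Z) ⊗[k] (W →ₗ[k] V) →ₗ[k] (W →ₗ[k] V) :=
    TensorProduct.lift
      (LinearMap.lsmul k (W →ₗ[k] V) ∘ₗ LinearMap.trace k T ∘ₗ
        LinearMap.compRight k a)
  have hL : ∀ u v, L (u ⊗ₜ v) = LinearMap.trace k T (a ∘ₗ u) • v := fun u v => rfl
  have h1 : ∀ y, LinearMap.trace k (T ⊗[k] W)
      ((TensorProduct.map a f) ∘ₗ homTensorHomEquiv k T W Z V y) =
      LinearMap.trace k W (f ∘ₗ L y) := by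
    intro y
    induction y with
    | zero => simp
    | add y z hy hz => simp only [map_add, LinearMap.comp_add, hy, hz]
    | tmul u v =>
      rw [hL, homTensorHomEquiv_apply, TensorProduct.homTensorHomMap_apply,
        ← TensorProduct.map_comp, LinearMap.trace_tensorProduct', LinearMap.comp_smul,
        map_smul, smul_eq_mul]
  rw [h1]
  apply hneg
  intro s
  have hinvT : ρT s ∘ₗ ρT s⁻¹ = LinearMap.id := by
    rw [← Module.End.mul_eq_comp, ← map_mul, mul_inv_cancel, map_one]; rfl
  have hinvT' : ρT s⁻¹ ∘ₗ ρT s = LinearMap.id := by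
    rw [← Module.End.mul_eq_comp, ← map_mul, inv_mul_cancel, map_one]; rfl
  have hinvW : ρW s ∘ₗ ρW s⁻¹ = LinearMap.id := by
    rw [← Module.End.mul_eq_comp, ← map_mul, mul_inv_cancel, map_one]; rfl
  have hinvW' : ρW s⁻¹ ∘ₗ ρW s = LinearMap.id := by
    rw [← Module.End.mul_eq_comp, ← map_mul, inv_mul_cancel, map_one]; rfl
  let C : (T →ₗ[k] Z) ⊗[k] (W →ₗ[k] V) →ₗ[k] (T →ₗ[k] Z) ⊗[k] (W →ₗ[k] V) :=
    TensorProduct.map (LinearMap.compRight k (ρZ s) ∘ₗ LinearMap.lcomp k Z (ρT s⁻¹))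
      (LinearMap.compRight k (ρV s) ∘ₗ LinearMap.lcomp k V (ρW s⁻¹))
  have hC : ∀ u v, C (u ⊗ₜ v) =
      (ρZ s ∘ₗ u ∘ₗ ρT s⁻¹) ⊗ₜ (ρV s ∘ₗ v ∘ₗ ρW s⁻¹) := fun u v => rfl
  have h2 : ∀ y, homTensorHomEquiv k T W Z V (C y) =
      TensorProduct.map (ρZ s) (ρV s) ∘ₗ homTensorHomEquiv k T W Z V y ∘ₗ
        TensorProduct.map (ρT s⁻¹) (ρW s⁻¹) := by
    intro y
    induction y with
    | zero => simp
    | add y z hy hz => simp only [map_add, LinearMap.comp_add, LinearMap.add_comp, hy, hz]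
    | tmul u v =>
      rw [hC, homTensorHomEquiv_apply, homTensorHomEquiv_apply,
        TensorProduct.homTensorHomMap_apply, TensorProduct.homTensorHomMap_apply,
        ← TensorProduct.map_comp, ← TensorProduct.map_comp]
  have h3 : ∀ y, L (C y) = ρV s ∘ₗ L y ∘ₗ ρW s⁻¹ := by
    intro y
    induction y with
    | zero => simp
    | add y z hy hz => simp only [map_add, LinearMap.comp_add, LinearMap.add_comp, hy, hz]
    | tmul u v =>
      rw [hC, hL, hL, ← LinearMap.comp_assoc, ha, LinearMap.comp_assoc,
        LinearMap.trace_comp_comm', LinearMap.comp_assoc, LinearMap.comp_assoc, hinvT',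
        LinearMap.comp_id, LinearMap.smul_comp, LinearMap.comp_smul]
  have h4 : C x = x := by
    apply (homTensorHomEquiv k T W Z V).injective
    have e := hh s
    change _ ∘ₗ TensorProduct.map (ρT s) (ρW s) = TensorProduct.map (ρZ s) (ρV s) ∘ₗ _ at e
    rw [h2, ← LinearMap.comp_assoc, ← e, LinearMap.comp_assoc, ← TensorProduct.map_comp,
      hinvT, hinvW, TensorProduct.map_id, LinearMap.comp_id]
  have h5 := h3 x
  rw [h4] at h5
  conv_lhs => rw [h5]
  rw [LinearMap.comp_assoc, LinearMap.comp_assoc, hinvW', LinearMap.comp_id]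
end

section
/- Let k be an algebraically closed field and V a finite-dimensional k-vector space. Let g be an invertible linear endomorphism of V, let E be a linear endomorphism of V, and let q ∈ k be such that qⁿ ≠ 1 for every positive integer n (q is not a root of unity). Suppose that g ∘ E = q · (E ∘ g). Then E is nilpotent. -/
/-- If `g` is invertible, `q` is not a root of unity and `g ∘ E = q • (E ∘ g)`,
then `E` is nilpotent. -/
theorem isNilpotent_of_conj_smul
    {k V : Type*} [Field k] [IsAlgClosed k]
    [AddCommGroup V] [Module k V] [FiniteDimensional k V]
    (g E : Module.End k V) (hg : Function.Bijective g) (q : k)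
    (hq : ∀ n : ℕ, 0 < n → q ^ n ≠ 1)
    (hcomm : g * E = q • (E * g)) :
    IsNilpotent E := by
  have hc : ∀ v, g (E v) = q • E (g v) := fun v => by
    simpa using LinearMap.congr_fun hcomm v
  by_cases hq0 : q = 0
  · have : E = 0 := by
      ext v
      apply hg.1
      simp [hc, hq0]
    rw [this]
    exact IsNilpotent.zero
  -- eigenvalues of `E` are stable under multiplication by `q⁻¹`
  have step : ∀ μ, E.HasEigenvalue μ → E.HasEigenvalue (q⁻¹ * μ) := by
    intro μ hμ
    obtain ⟨v, hv⟩ := hμ.exists_hasEigenvector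
    refine Module.End.hasEigenvalue_of_hasEigenvector (x := g v) ⟨?_, ?_⟩
    · rw [Module.End.mem_eigenspace_iff, mul_smul, ← map_smul g μ v, ← hv.apply_eq_smul, hc,
        smul_smul, inv_mul_cancel₀ hq0, one_smul]
    · intro h
      exact hv.2 (hg.1 (by simpa using h))
  have zero : ∀ μ, E.HasEigenvalue μ → μ = 0 := by
    intro μ hμ
    by_contra h0
    have all : ∀ n : ℕ, E.HasEigenvalue (q⁻¹ ^ n * μ) := by
      intro n
      induction n with
      | zero => simpa using hμ
      | succ n ih => rw [pow_succ', mul_assoc]; exact step _ ih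
    have inj : Function.Injective (fun n : ℕ => q⁻¹ ^ n * μ) := by
      have key : ∀ a b : ℕ, a < b → q⁻¹ ^ a * μ ≠ q⁻¹ ^ b * μ := by
        intro a b hab h
        have h1 := mul_right_cancel₀ h0 h
        obtain ⟨c, rfl⟩ := Nat.exists_eq_add_of_lt hab
        rw [add_assoc, pow_add] at h1
        have h2 : q⁻¹ ^ (c + 1) = 1 :=
          (mul_eq_left₀ (pow_ne_zero a (inv_ne_zero hq0))).1 h1.symm
        rw [inv_pow, inv_eq_one] at h2
        exact hq _ (Nat.succ_pos c) h2
      intro a b h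
      rcases lt_trichotomy a b with hab | hab | hab
      · exact (key _ _ hab h).elim
      · exact hab
      · exact (key _ _ hab h.symm).elim
    exact Set.infinite_of_injective_forall_mem inj all (Module.End.finite_hasEigenvalue E)
  have top : E.maxGenEigenspace 0 = ⊤ := by
    rw [eq_top_iff, ← Module.End.iSup_maxGenEigenspace_eq_top E]
    refine iSup_le fun μ => ?_
    by_cases h : E.HasEigenvalue μ
    · rw [zero μ h]
    · have : E.maxGenEigenspace μ = ⊥ := by
        by_contra hne
        apply h
        exact (Module.End.hasUnifEigenvalue_iff_hasUnifEigenvalue_one (by simp)).1 hne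
      rw [this]
      exact bot_le
  refine ⟨Module.finrank k V, ?_⟩
  rw [Module.End.maxGenEigenspace_eq_genEigenspace_finrank] at top
  ext v
  have hv : v ∈ E.genEigenspace 0 (Module.finrank k V) := top ▸ Submodule.mem_top
  rw [Module.End.mem_genEigenspace_nat] at hv
  simpa using hv
end

section
/- Let k be a field, q ∈ k a nonzero element with q² ≠ 1, and define for each positive integer n the quantum integer [n]_q = (qⁿ − q^{−n})/(q − q^{−1}) ∈ k. Then for every integer l ≥ 2, the identity [3]_q · [2l+1]_q = [2l−1]_q holds if and only if q^{4(l+1)} = 1. -/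
/-- The quantum integer `[n]_q = (q^n - q^{-n})/(q - q^{-1})`. -/
noncomputable def qInt {k : Type*} [Field k] (q : k) (n : ℕ) : k :=
  (q ^ (n : ℤ) - q ^ (-(n : ℤ))) / (q - q⁻¹)

/-- For `q ≠ 0` with `q² ≠ 1` and `l ≥ 2`, one has `[3]_q [2l+1]_q = [2l-1]_q`
iff `q^{4(l+1)} = 1`. -/
theorem qInt_identity_iff (k : Type*) [Field k] (q : k) (hq0 : q ≠ 0)
    (hq2 : q ^ 2 ≠ 1) (l : ℕ) (hl : 2 ≤ l) :
    qInt q 3 * qInt q (2 * l + 1) = qInt q (2 * l - 1) ↔ q ^ (4 * (l + 1)) = 1 := by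
  obtain ⟨m, rfl⟩ : ∃ m, l = m + 1 := ⟨l - 1, by omega⟩
  have e1 : 2 * (m + 1) - 1 = 2 * m + 1 := by omega
  have hd : q ^ 2 - 1 ≠ 0 := sub_ne_zero.mpr hq2
  have hdd : q - q⁻¹ = (q ^ 2 - 1) / q := by
    field_simp
  obtain ⟨y, hy⟩ : ∃ y, y = q ^ (2 * m) := ⟨_, rfl⟩
  have hy0 : y ≠ 0 := hy ▸ pow_ne_zero _ hq0
  have e2 : q ^ (2 * m + 1) = y * q := by rw [hy]; ring
  have e3 : q ^ (2 * (m + 1) + 1) = y * q ^ 3 := by rw [hy]; ring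
  have e4 : q ^ (4 * (m + 1 + 1)) = y ^ 2 * q ^ 8 := by rw [hy]; ring
  have key : qInt q 3 * qInt q (2 * (m + 1) + 1) - qInt q (2 * (m + 1) - 1)
      = (q ^ 2 + 1) * (y ^ 2 * q ^ 8 - 1) / ((q ^ 2 - 1) * q ^ 4 * y) := by
    rw [e1]
    unfold qInt
    simp only [zpow_neg, zpow_natCast]
    rw [e2, e3, hdd]
    field_simp
    ring
  have hden : (q ^ 2 - 1) * q ^ 4 * y ≠ 0 :=
    mul_ne_zero (mul_ne_zero hd (pow_ne_zero _ hq0)) hy0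
  rw [← sub_eq_zero, key, div_eq_zero_iff, or_iff_left hden, mul_eq_zero, e4, sub_eq_zero]
  constructor
  · rintro (h | h)
    · have h2 : q ^ 4 = 1 := by linear_combination (q ^ 2 - 1) * h
      rw [← e4, pow_mul, h2, one_pow]
    · exact h
  · exact Or.inr
end

section
/- Let k be a field, q ∈ k a nonzero element with q² ≠ 1, l ≥ 2 an integer, and suppose q^{4(l+1)} = 1. Define the quantum integer [n]_q = (qⁿ − q^{−n})/(q − q^{−1}) ∈ k. Then: (a) if q² = −1, the sum Σ_{i=0}^{l} ([2i+1]_q)² equals the image of l+1 in k; (b) if q⁴ ≠ 1, the sum Σ_{i=0}^{l} ([2i+1]_q)² equals −2(l+1)/(q − q^{−1})². -/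
/-- Computation of the formal codegree `Σ_{i=0}^{l} [2i+1]_q²`. -/
theorem formal_codegree_qInt (k : Type*) [Field k] (q : k) (hq0 : q ≠ 0)
    (hq2 : q ^ 2 ≠ 1) (l : ℕ) (hl : 2 ≤ l) (hq4l : q ^ (4 * (l + 1)) = 1) :
    (q ^ 2 = -1 →
      ∑ i ∈ Finset.range (l + 1), (qInt q (2 * i + 1)) ^ 2 = ((l + 1 : ℕ) : k)) ∧
    (q ^ 4 ≠ 1 →
      ∑ i ∈ Finset.range (l + 1), (qInt q (2 * i + 1)) ^ 2 =
        -(2 * ((l + 1 : ℕ) : k)) / (q - q⁻¹) ^ 2) := by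
  have hq2' : q ^ 2 - 1 ≠ 0 := sub_ne_zero.mpr hq2
  have hd : q - q⁻¹ ≠ 0 := by
    intro h
    apply hq2'
    have h2 : q * (q - q⁻¹) = 0 := by rw [h, mul_zero]
    rw [mul_sub, mul_inv_cancel₀ hq0] at h2
    rw [pow_two]
    exact h2
  have key : ∀ i : ℕ, (qInt q (2 * i + 1)) ^ 2 =
      (q ^ 2 * (q ^ 4) ^ i + q⁻¹ ^ 2 * (q⁻¹ ^ 4) ^ i - 2) / (q - q⁻¹) ^ 2 := by
    intro i
    unfold qInt
    rw [div_pow, zpow_neg, zpow_natCast, ← inv_pow]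
    congr 1
    have h1 : q ^ (2 * i + 1) * q⁻¹ ^ (2 * i + 1) = 1 := by
      rw [← mul_pow, mul_inv_cancel₀ hq0, one_pow]
    have h2 : ∀ x : k, (x ^ (2 * i + 1)) ^ 2 = x ^ 2 * (x ^ 4) ^ i := by
      intro x
      rw [← pow_mul, ← pow_mul, ← pow_add]
      congr 1
      ring
    rw [← h2, ← h2]
    linear_combination (-2) * h1
  constructor
  · intro h
    have hinv : q⁻¹ = -q := by
      apply inv_eq_of_mul_eq_one_right
      linear_combination -h
    have h4 : q ^ 4 = 1 := by linear_combination (q ^ 2 - 1) * h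
    have h1 : ∀ i ∈ Finset.range (l + 1), (qInt q (2 * i + 1)) ^ 2 = 1 := by
      intro i _
      have h4' : q⁻¹ ^ 4 = 1 := by rw [inv_pow, h4, inv_one]
      rw [key, h4, h4', one_pow, div_eq_one_iff_eq (pow_ne_zero 2 hd), hinv]
      linear_combination (-2) * h
    rw [Finset.sum_congr rfl h1]
    simp
  · intro h4
    have geom : ∀ x : k, x ≠ 1 → x ^ (l + 1) = 1 → ∑ i ∈ Finset.range (l + 1), x ^ i = 0 := by
      intro x hx hx1
      rw [geom_sum_eq hx, hx1, sub_self, zero_div]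
    have g1 := geom (q ^ 4) h4 (by rw [← pow_mul, hq4l])
    have g2 := geom (q⁻¹ ^ 4) (by rw [inv_pow]; exact inv_ne_one.mpr h4)
      (by rw [← pow_mul, inv_pow, hq4l, inv_one])
    rw [Finset.sum_congr rfl (fun i _ => key i), ← Finset.sum_div, Finset.sum_sub_distrib,
      Finset.sum_add_distrib, ← Finset.mul_sum, ← Finset.mul_sum, g1, g2]
    congr 1
    simp
    ring
end
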